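/- arXiv:1907.06761 — 2 statements merged into one kernel-verified Lean document; each statement's English description precedes it below -/
import Mathlib

section
/- Suppose n ≡ 2 (mod 4). Then the fixed subring A^G is generated as a ℂ-algebra by the orbit sums of degree n; that is, A^G equals the ℂ-subalgebra of A generated by the set {O(n−i, i) : 0 ≤ i ≤ n/2}. (In the notation of the paper, β(g) = n < |G| = 2n, so the invariants are generated in degree n.) -/
/-!
Setting: `lam n = exp(2πi/n)` is a primitive `n`-th root of unity in `ℂ`.
`SkewAlg` is the `(-1)`-skew polynomial ring `A = ℂ⟨u,v⟩/(uv+vu)`, with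
generators `uGen`, `vGen`.  The automorphism `g` (of order `2n`) is determined
by `g u = v`, `g v = lam n • u`, and generates the cyclic group `G`, so that
the fixed subring `A^G` is `{a | g a = a}`.  The orbit sum is
`orbitSum n a b = u^a v^b + (-1)^(a*b) * (lam n)^b • (u^b v^a)`.
-/

noncomputable section

/-- `lam n = exp(2πi/n)`, a primitive `n`-th root of unity. -/
def lam (n : ℕ) : ℂ := Complex.exp (2 * (Real.pi : ℂ) * Complex.I / (n : ℂ))

/-- The defining relation of the `(-1)`-skew polynomial ring: `uv + vu = 0`. -/
inductive SkewRel : FreeAlgebra ℂ (Fin 2) → FreeAlgebra ℂ (Fin 2) → Prop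
  | rel : SkewRel (FreeAlgebra.ι ℂ 0 * FreeAlgebra.ι ℂ 1 + FreeAlgebra.ι ℂ 1 * FreeAlgebra.ι ℂ 0) 0

/-- The skew polynomial ring `A = ℂ⟨u,v⟩/(uv+vu)`. -/
abbrev SkewAlg : Type := RingQuot SkewRel

/-- The generator `u` of `A`. -/
def uGen : SkewAlg := RingQuot.mkAlgHom ℂ SkewRel (FreeAlgebra.ι ℂ 0)

/-- The generator `v` of `A`. -/
def vGen : SkewAlg := RingQuot.mkAlgHom ℂ SkewRel (FreeAlgebra.ι ℂ 1)

/-- Orbit sum `O(a,b) = u^a v^b + (-1)^(ab) λ^b u^b v^a`. -/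
def orbitSum (n a b : ℕ) : SkewAlg :=
  uGen ^ a * vGen ^ b + ((-1 : ℂ) ^ (a * b) * lam n ^ b) • (uGen ^ b * vGen ^ a)

/-!
The automorphism `g` sends a monomial to a scalar multiple of a monomial, and `g²` scales
`u^a v^b` by `λ^(a+b)`. Averaging a fixed element first over `g²` and then over `{1, g}` writes it
as a combination of the orbit sums `O(a,b)` with `n ∣ a + b`. Since `O(a,b)` is the trace of
`u^a v^b` for the involution that `g` induces on the degrees divisible by `n`, a product
`O(a,b) O(c,d)` is a combination of `O(a+c,b+d)` and `O(a+d,b+c)`. For `n = 2m` with `m` odd these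
two terms agree when `c = d = m`, because `(-1)^(m^2) λ^m = 1`, so `O(a,b) O(m,m)` is a nonzero
multiple of `O(a+m,b+m)`. By induction on the degree this gives every orbit sum with both exponents
at least `m`; the others follow from `O(a,b) O(n,0) = ±O(a+n,b) + O(a,b+n)` and the proportionality
of `O(a,b)` and `O(b,a)`.
-/

section QCommuting

variable {R A : Type*} [CommSemiring R] [Semiring A] [Algebra R A] {x y : A} {q : R}

theorem mul_pow_of_mul_eq_smul (h : y * x = q • (x * y)) (c : ℕ) :
    y * x ^ c = q ^ c • (x ^ c * y) := by
  induction c with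
  | zero => simp
  | succ c ih =>
    rw [pow_succ, ← mul_assoc, ih, smul_mul_assoc, mul_assoc, h, mul_smul_comm, smul_smul,
      ← pow_succ, mul_assoc]

theorem pow_mul_pow_of_mul_eq_smul (h : y * x = q • (x * y)) (b c : ℕ) :
    y ^ b * x ^ c = q ^ (b * c) • (x ^ c * y ^ b) := by
  induction b with
  | zero => simp
  | succ b ih =>
    rw [pow_succ, mul_assoc, mul_pow_of_mul_eq_smul h, mul_smul_comm, ← mul_assoc, ih,
      smul_mul_assoc, smul_smul, ← pow_add, mul_assoc, add_one_mul, add_comm c]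

theorem pow_mul_pow_mul_pow_mul_pow_of_mul_eq_smul (h : y * x = q • (x * y)) (a b c d : ℕ) :
    x ^ a * y ^ b * (x ^ c * y ^ d) = q ^ (b * c) • (x ^ (a + c) * y ^ (b + d)) := by
  rw [mul_assoc, ← mul_assoc (y ^ b), pow_mul_pow_of_mul_eq_smul h, smul_mul_assoc, mul_smul_comm,
    pow_add, pow_add]
  simp only [mul_assoc]

theorem exists_eq_smul_of_mem_closure_pair (h : y * x = q • (x * y)) {z : A}
    (hz : z ∈ Submonoid.closure {x, y}) : ∃ (r : R) (a b : ℕ), z = r • (x ^ a * y ^ b) := by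
  induction hz using Submonoid.closure_induction_left with
  | one => exact ⟨1, 0, 0, by simp⟩
  | mul_left t ht z _ ih =>
    obtain ⟨r, a, b, rfl⟩ := ih
    obtain rfl | rfl := ht
    · exact ⟨r, a + 1, b, by rw [mul_smul_comm, ← mul_assoc, ← pow_succ']⟩
    · refine ⟨r * q ^ a, a, b + 1, ?_⟩
      rw [mul_smul_comm, ← mul_assoc, mul_pow_of_mul_eq_smul h, smul_mul_assoc, smul_smul,
        mul_assoc, ← pow_succ']

theorem adjoin_pair_eq_span_of_mul_eq_smul (h : y * x = q • (x * y)) :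
    Subalgebra.toSubmodule (Algebra.adjoin R {x, y}) =
      Submodule.span R (Set.range fun p : ℕ × ℕ ↦ x ^ p.1 * y ^ p.2) := by
  rw [Algebra.adjoin_eq_span]
  apply le_antisymm <;> rw [Submodule.span_le]
  · intro z hz
    obtain ⟨r, a, b, rfl⟩ := exists_eq_smul_of_mem_closure_pair h hz
    exact Submodule.smul_mem _ r (Submodule.subset_span ⟨(a, b), rfl⟩)
  · rintro _ ⟨p, rfl⟩
    have hx : x ∈ Submonoid.closure {x, y} := Submonoid.subset_closure (by simp)
    have hy : y ∈ Submonoid.closure {x, y} := Submonoid.subset_closure (by simp)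
    exact Submodule.subset_span (mul_mem (pow_mem hx _) (pow_mem hy _))

end QCommuting

section Averaging

open Finset

theorem mem_span_image_sum_pow_of_fixed {K V : Type*} [DivisionRing K] [AddCommGroup V]
    [Module K V] {f : Module.End K V} {N : ℕ} (hN : (N : K) ≠ 0) {s : Set V} {x : V}
    (hfx : f x = x) (hx : x ∈ Submodule.span K s) :
    x ∈ Submodule.span K ((fun w ↦ ∑ j ∈ range N, (f ^ j) w) '' s) := by
  let T : Module.End K V := ∑ j ∈ range N, f ^ j
  have hT (w : V) : T w = ∑ j ∈ range N, (f ^ j) w := LinearMap.sum_apply ..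
  have hpow (j : ℕ) : (f ^ j) x = x := by
    rw [Module.End.pow_apply]
    exact Function.IsFixedPt.iterate hfx j
  have hTx : T x = (N : K) • x := by simp [hT, hpow, Nat.cast_smul_eq_nsmul]
  have hmem : T x ∈ Submodule.span K (T '' s) := by
    rw [← Submodule.map_span]
    exact Submodule.mem_map_of_mem hx
  simp only [← hT]
  exact (Submodule.smul_mem_iff _ hN).1 (hTx ▸ hmem)

theorem mem_span_image_eigenvalue_eq_one_of_fixed {K V ι : Type*} [Field K] [AddCommGroup V]
    [Module K V] {f : Module.End K V} {N : ℕ} (hN : (N : K) ≠ 0) {w : ι → V} {μ : ι → K}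
    (hw : ∀ i, f (w i) = μ i • w i) (hμ : ∀ i, μ i ^ N = 1) {x : V} (hfx : f x = x)
    (hx : x ∈ Submodule.span K (Set.range w)) : x ∈ Submodule.span K (w '' {i | μ i = 1}) := by
  have hpow (j : ℕ) (i : ι) : (f ^ j) (w i) = μ i ^ j • w i := by
    induction j with
    | zero => simp
    | succ j ih => rw [pow_succ', Module.End.mul_apply, ih, map_smul, hw, smul_smul, pow_succ]
  refine Submodule.span_le.2 ?_ (mem_span_image_sum_pow_of_fixed hN hfx hx)
  rintro _ ⟨_, ⟨i, rfl⟩, rfl⟩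
  simp only [hpow, ← sum_smul]
  by_cases hi : μ i = 1
  · exact Submodule.smul_mem _ _ (Submodule.subset_span ⟨i, hi, rfl⟩)
  · have hgeom : ∑ j ∈ range N, μ i ^ j = 0 := by
      rw [geom_sum_eq hi, hμ, sub_self, zero_div]
    simp [hgeom]

end Averaging

section OrbitSum

theorem vGen_mul_uGen : vGen * uGen = (-1 : ℂ) • (uGen * vGen) := by
  have h := RingQuot.mkAlgHom_rel ℂ SkewRel.rel
  simp only [map_add, map_mul, map_zero] at h
  exact (eq_neg_of_add_eq_zero_right h).trans (neg_one_smul ℂ _).symm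

theorem adjoin_uGen_vGen : Algebra.adjoin ℂ {uGen, vGen} = ⊤ := by
  have h := congrArg (Subalgebra.map (RingQuot.mkAlgHom ℂ SkewRel))
    (FreeAlgebra.adjoin_range_ι ℂ (Fin 2))
  rw [Algebra.map_top, (AlgHom.range_eq_top _).2 (RingQuot.mkAlgHom_surjective ℂ SkewRel),
    AlgHom.map_adjoin, ← Set.range_comp] at h
  rw [← h]
  congr 1
  ext z
  simp [uGen, vGen, Fin.exists_fin_two, eq_comm]

theorem span_range_uGen_pow_mul_vGen_pow :
    Submodule.span ℂ (Set.range fun p : ℕ × ℕ ↦ uGen ^ p.1 * vGen ^ p.2) = ⊤ := by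
  rw [← adjoin_pair_eq_span_of_mul_eq_smul vGen_mul_uGen, adjoin_uGen_vGen, Algebra.top_toSubmodule]

theorem lam_pow_eq_one_of_dvd {n k : ℕ} (h : n ∣ k) : lam n ^ k = 1 := by
  obtain rfl | hn := eq_or_ne n 0
  · simp [lam]
  · exact ((Complex.isPrimitiveRoot_exp n hn).pow_eq_one_iff_dvd k).2 h

theorem lam_two_mul_pow {m : ℕ} (hm : m ≠ 0) : lam (2 * m) ^ m = -1 := by
  have hm' : (m : ℂ) ≠ 0 := Nat.cast_ne_zero.2 hm
  rw [lam, ← Complex.exp_nat_mul, ← Complex.exp_pi_mul_I]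
  congr 1
  push_cast
  field_simp

theorem orbitSum_zero_zero (n : ℕ) : orbitSum n 0 0 = 2 := by
  simp [orbitSum, one_add_one_eq_two]

theorem orbitSum_swap {n a b : ℕ} (hab : n ∣ a + b) :
    orbitSum n a b = ((-1 : ℂ) ^ (a * b) * lam n ^ b) • orbitSum n b a := by
  have hlam : lam n ^ b * lam n ^ a = 1 := by
    rw [← pow_add, add_comm, lam_pow_eq_one_of_dvd hab]
  have hsign : (-1 : ℂ) ^ (a * b) * (-1) ^ (a * b) = 1 := by simp [← mul_pow]
  have hcoeff : (-1 : ℂ) ^ (a * b) * lam n ^ b * ((-1) ^ (a * b) * lam n ^ a) = 1 := by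
    rw [mul_mul_mul_comm, hsign, hlam, one_mul]
  rw [orbitSum, orbitSum, smul_add, smul_smul, mul_comm b a, hcoeff, one_smul, add_comm]

theorem orbitSum_mul_orbitSum {n c d : ℕ} (a b : ℕ) (hcd : n ∣ c + d) :
    orbitSum n a b * orbitSum n c d =
      (-1 : ℂ) ^ (b * c) • orbitSum n (a + c) (b + d) +
        ((-1 : ℂ) ^ (d * (b + c)) * lam n ^ d) • orbitSum n (a + d) (b + c) := by
  have hlam : lam n ^ c * lam n ^ d = 1 := by rw [← pow_add, lam_pow_eq_one_of_dvd hcd]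
  have hsq (k : ℕ) : ((-1 : ℂ) ^ k) ^ 2 = 1 := by rw [pow_right_comm, neg_one_sq, one_pow]
  have hmul := pow_mul_pow_mul_pow_mul_pow_of_mul_eq_smul vGen_mul_uGen
  simp only [orbitSum, add_mul, mul_add, smul_mul_assoc, mul_smul_comm, hmul, smul_add, smul_smul]
  -- Compare the coefficients of the monomials with exponents `(a + c, b + d)`, `(b + c, a + d)`,
  -- `(a + d, b + c)` and `(b + d, a + c)`.
  match_scalars
  · ring
  · linear_combination -((-1) ^ (a * b + a * c) * lam n ^ b) *
      ((-1) ^ (d * (b + c) * 2) * hlam + hsq (d * (b + c)))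
  · ring
  · linear_combination -((-1) ^ (a * b + a * d + c * d) * lam n ^ (b + d)) * hsq (b * c)

/-- The `ℂ`-subalgebra of `A` generated by the orbit sums of degree `n`. Only `O(n-i, i)` with
`i ≤ n/2` is listed, since `orbitSum_swap` makes the other ones scalar multiples of these. -/
def orbitSumAlgebra (n : ℕ) : Subalgebra ℂ SkewAlg :=
  Algebra.adjoin ℂ {x | ∃ i : ℕ, i ≤ n / 2 ∧ x = orbitSum n (n - i) i}

theorem orbitSum_mem_orbitSumAlgebra_of_add_eq {n a b : ℕ} (hab : a + b = n) (hba : b ≤ a) :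
    orbitSum n a b ∈ orbitSumAlgebra n :=
  Algebra.subset_adjoin ⟨b, by lia, by rw [← hab, Nat.add_sub_cancel]⟩

theorem orbitSum_add_left_mem_orbitSumAlgebra {n a b : ℕ} (h : orbitSum n a b ∈ orbitSumAlgebra n)
    (h' : orbitSum n a (b + n) ∈ orbitSumAlgebra n) :
    orbitSum n (a + n) b ∈ orbitSumAlgebra n := by
  have hprod : orbitSum n a b * orbitSum n n 0 =
      (-1 : ℂ) ^ (b * n) • orbitSum n (a + n) b + orbitSum n a (b + n) := by
    simpa using orbitSum_mul_orbitSum a b (c := n) (d := 0) (dvd_refl n)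
  have hgen : orbitSum n n 0 ∈ orbitSumAlgebra n :=
    orbitSum_mem_orbitSumAlgebra_of_add_eq (add_zero n) n.zero_le
  have hsmul := (orbitSumAlgebra n).sub_mem (mul_mem h hgen) h'
  rw [hprod, add_sub_cancel_right] at hsmul
  have hne : (-1 : ℂ) ^ (b * n) ≠ 0 := by simp
  exact (Submodule.smul_mem_iff (orbitSumAlgebra n).toSubmodule hne).1 hsmul

theorem orbitSum_add_add_mem_orbitSumAlgebra {m a b : ℕ} (hm : Odd m)
    (h : orbitSum (2 * m) a b ∈ orbitSumAlgebra (2 * m)) :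
    orbitSum (2 * m) (a + m) (b + m) ∈ orbitSumAlgebra (2 * m) := by
  have hsign : (-1 : ℂ) ^ (m * (b + m)) * lam (2 * m) ^ m = (-1) ^ (b * m) := by
    rw [lam_two_mul_pow hm.pos.ne', mul_add, pow_add, (hm.mul hm).neg_one_pow, mul_comm m b]
    simp
  have hprod : orbitSum (2 * m) a b * orbitSum (2 * m) m m =
      (2 * (-1 : ℂ) ^ (b * m)) • orbitSum (2 * m) (a + m) (b + m) := by
    rw [orbitSum_mul_orbitSum a b (dvd_of_eq (two_mul m)), hsign, ← two_smul ℂ, smul_smul]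
  have hgen : orbitSum (2 * m) m m ∈ orbitSumAlgebra (2 * m) :=
    orbitSum_mem_orbitSumAlgebra_of_add_eq (two_mul m).symm le_rfl
  have hsmul := mul_mem h hgen
  rw [hprod] at hsmul
  have hne : 2 * (-1 : ℂ) ^ (b * m) ≠ 0 := by simp
  exact (Submodule.smul_mem_iff (orbitSumAlgebra (2 * m)).toSubmodule hne).1 hsmul

theorem orbitSum_mem_orbitSumAlgebra {m a b : ℕ} (hm : Odd m) (hab : 2 * m ∣ a + b) :
    orbitSum (2 * m) a b ∈ orbitSumAlgebra (2 * m) := by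
  obtain ⟨k, hk⟩ := hab
  induction k generalizing a b with
  | zero =>
    obtain ⟨rfl, rfl⟩ : a = 0 ∧ b = 0 := by lia
    rw [orbitSum_zero_zero]
    exact ofNat_mem _ 2
  | succ k ih =>
    have shift {c d : ℕ} (hcd : c + d = 2 * m * (k + 1)) (hc : m ≤ c) (hd : m ≤ d) :
        orbitSum (2 * m) c d ∈ orbitSumAlgebra (2 * m) := by
      obtain ⟨c, rfl⟩ := Nat.exists_eq_add_of_le' hc
      obtain ⟨d, rfl⟩ := Nat.exists_eq_add_of_le' hd
      exact orbitSum_add_add_mem_orbitSumAlgebra hm (ih (by lia))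
    wlog hba : b ≤ a generalizing a b
    · rw [orbitSum_swap ⟨k + 1, hk⟩]
      exact (orbitSumAlgebra _).smul_mem (this (by lia) (by lia)) _
    obtain rfl | hk0 := eq_or_ne k 0
    · exact orbitSum_mem_orbitSumAlgebra_of_add_eq (by lia) hba
    obtain hmb | hbm := le_or_gt m b
    · exact shift hk (hmb.trans hba) hmb
    have hle : 2 * m ≤ 2 * m * k := Nat.le_mul_of_pos_right _ (Nat.pos_of_ne_zero hk0)
    obtain ⟨a, rfl⟩ : ∃ c, a = c + 2 * m := Nat.exists_eq_add_of_le' (by lia)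
    exact orbitSum_add_left_mem_orbitSumAlgebra (ih (by lia)) (shift (by lia) (by lia) (by lia))

end OrbitSum

section FixedRing

variable {n : ℕ} {g : SkewAlg →ₐ[ℂ] SkewAlg} (hgu : g uGen = vGen) (hgv : g vGen = lam n • uGen)
include hgu hgv

theorem map_uGen_pow_mul_vGen_pow (a b : ℕ) :
    g (uGen ^ a * vGen ^ b) = ((-1 : ℂ) ^ (a * b) * lam n ^ b) • (uGen ^ b * vGen ^ a) := by
  rw [map_mul, map_pow, map_pow, hgu, hgv, smul_pow, mul_smul_comm,
    pow_mul_pow_of_mul_eq_smul vGen_mul_uGen, smul_smul, mul_comm (lam n ^ b)]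

theorem orbitSum_eq_add_map (a b : ℕ) :
    orbitSum n a b = uGen ^ a * vGen ^ b + g (uGen ^ a * vGen ^ b) := by
  rw [map_uGen_pow_mul_vGen_pow hgu hgv, orbitSum]

theorem map_map_uGen_pow_mul_vGen_pow (a b : ℕ) :
    g (g (uGen ^ a * vGen ^ b)) = lam n ^ (a + b) • (uGen ^ a * vGen ^ b) := by
  have hu : g (g uGen) = lam n • uGen := by rw [hgu, hgv]
  have hv : g (g vGen) = lam n • vGen := by rw [hgv, map_smul, hgu]
  simp only [map_mul, map_pow, hu, hv, smul_pow, smul_mul_smul_comm, pow_add]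

theorem map_orbitSum {a b : ℕ} (hab : n ∣ a + b) : g (orbitSum n a b) = orbitSum n a b := by
  rw [orbitSum_eq_add_map hgu hgv, map_add, map_map_uGen_pow_mul_vGen_pow hgu hgv,
    lam_pow_eq_one_of_dvd hab, one_smul, add_comm]

theorem map_eq_self_of_mem_orbitSumAlgebra {x : SkewAlg} (hx : x ∈ orbitSumAlgebra n) :
    g x = x := by
  suffices orbitSumAlgebra n ≤ AlgHom.equalizer g (AlgHom.id ℂ SkewAlg) from this hx
  refine Algebra.adjoin_le ?_
  rintro _ ⟨i, hi, rfl⟩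
  exact map_orbitSum hgu hgv (by rw [Nat.sub_add_cancel (by lia)])

theorem mem_span_orbitSum_of_map_eq_self (hn : n ≠ 0) {x : SkewAlg} (hx : g x = x) :
    x ∈ Submodule.span ℂ ((fun p : ℕ × ℕ ↦ orbitSum n p.1 p.2) '' {p | n ∣ p.1 + p.2}) := by
  have hdeg : x ∈ Submodule.span ℂ ((fun p : ℕ × ℕ ↦ uGen ^ p.1 * vGen ^ p.2) ''
      {p | lam n ^ (p.1 + p.2) = 1}) :=
    mem_span_image_eigenvalue_eq_one_of_fixed (f := (g.comp g).toLinearMap)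
      (Nat.cast_ne_zero.2 hn) (fun p ↦ map_map_uGen_pow_mul_vGen_pow hgu hgv p.1 p.2)
      (fun p ↦ by rw [pow_right_comm, lam_pow_eq_one_of_dvd dvd_rfl, one_pow])
      (by simp [hx]) (by simp [span_range_uGen_pow_mul_vGen_pow])
  have htrace := mem_span_image_sum_pow_of_fixed (f := g.toLinearMap) (N := 2) (by simp) hx hdeg
  refine Submodule.span_mono ?_ htrace
  rintro _ ⟨_, ⟨p, hp, rfl⟩, rfl⟩
  refine ⟨p, ((Complex.isPrimitiveRoot_exp n hn).pow_eq_one_iff_dvd _).1 hp, ?_⟩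
  simp [Finset.sum_range_succ, orbitSum_eq_add_map hgu hgv]

end FixedRing

/-- If `n ≡ 2 (mod 4)` then the fixed subring `A^G` is generated as a
`ℂ`-algebra by the orbit sums of degree `n`. -/
theorem fixed_eq_adjoin_of_mod_four_eq_two (n : ℕ) (hn : n % 4 = 2)
    (g : SkewAlg ≃ₐ[ℂ] SkewAlg) (hgu : g uGen = vGen) (hgv : g vGen = lam n • uGen) :
    {a : SkewAlg | g a = a} =
      ↑(Algebra.adjoin ℂ {x : SkewAlg | ∃ i : ℕ, i ≤ n / 2 ∧ x = orbitSum n (n - i) i}) := by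
  obtain ⟨m, rfl, hm⟩ : ∃ m, n = 2 * m ∧ Odd m := ⟨n / 2, by lia, Nat.odd_iff.2 (by lia)⟩
  have hgu' : g.toAlgHom uGen = vGen := hgu
  have hgv' : g.toAlgHom vGen = lam (2 * m) • uGen := hgv
  change _ = (orbitSumAlgebra (2 * m) : Set SkewAlg)
  refine Set.Subset.antisymm (fun x hx ↦ ?_)
    fun x hx ↦ map_eq_self_of_mem_orbitSumAlgebra hgu' hgv' hx
  have hspan := mem_span_orbitSum_of_map_eq_self hgu' hgv' (mul_ne_zero two_ne_zero hm.pos.ne') hx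
  refine (Submodule.span_le (p := (orbitSumAlgebra (2 * m)).toSubmodule)).2 ?_ hspan
  rintro _ ⟨p, hp, rfl⟩
  exact orbitSum_mem_orbitSumAlgebra hm hp
end
end

section
/- Suppose n is odd. Then the fixed subring A^G is strictly larger than the ℂ-subalgebra of A generated by the orbit sums of degrees n and 2n: A^G ≠ the ℂ-subalgebra generated by {O(n−i, i) : 0 ≤ i ≤ (n−1)/2} ∪ {O(2n−i, i) : 0 ≤ i ≤ n}. (This is the lower bound β(g) ≥ 3n > |G| = 2n, so the Noether bound fails for this action.) -/
/-!
Setting: `lam n = exp(2πi/n)` is a primitive `n`-th root of unity in `ℂ`.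
`SkewAlg` is the `(-1)`-skew polynomial ring `A = ℂ⟨u,v⟩/(uv+vu)`, with
generators `uGen`, `vGen`.  The automorphism `g` (of order `2n`) is determined
by `g u = v`, `g v = lam n • u`, and generates the cyclic group `G`, so that
the fixed subring `A^G` is `{a | g a = a}`.  The orbit sum is
`orbitSum n a b = u^a v^b + (-1)^(a*b) * (lam n)^b • (u^b v^a)`.
-/

noncomputable section

/-!
For `n` odd, `lam n = ω ^ 2` with `ω ^ n = 1`. Let `i`, `j` be the standard anticommuting units of
the split quaternions, `i ^ 2 = 1` and `j ^ 2 = -1`, and send `u` to `i` and `v` to `ω j`. When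
`n` divides `a + b`, the orbit sum `O(a,b)` goes to `ω ^ b (i ^ a j ^ b + j ^ a i ^ b)`. This is a
multiple of `i + j ^ n` if `a + b = n`, and it is `0` if `a + b = 2n`, so the subalgebra generated
by these orbit sums maps into the centralizer of `i + j ^ n`. But `O(3n,0) = u ^ (3n) + v ^ (3n)`
goes to `i + j ^ (3n) = i - j ^ n`, which does not commute with `i + j ^ n`.
-/

section Monoid

variable {M : Type*} [Monoid M] {x y : M} {a n : ℕ}

lemma exists_sq_eq_and_pow_eq_one_of_odd (hn : Odd n) (hx : x ^ n = 1) :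
    ∃ y : M, y ^ 2 = x ∧ y ^ n = 1 := by
  obtain ⟨k, rfl⟩ := hn
  refine ⟨x ^ (k + 1), ?_, ?_⟩
  · rw [← pow_mul, show (k + 1) * 2 = 2 * k + 1 + 1 by ring, pow_succ, hx, one_mul]
  · rw [pow_right_comm, hx, one_pow]

lemma pow_eq_one_of_sq_eq_one_of_even (hx : x ^ 2 = 1) (ha : Even a) : x ^ a = 1 := by
  rw [← Nat.two_mul_div_two_of_even ha, pow_mul, hx, one_pow]

lemma pow_eq_self_of_sq_eq_one_of_odd (hx : x ^ 2 = 1) (ha : Odd a) : x ^ a = x := by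
  obtain ⟨c, rfl⟩ := ha
  rw [pow_succ, pow_mul, hx, one_pow, one_mul]

variable [HasDistribNeg M]

lemma mul_pow_of_anticommute (hxy : x * y = -(y * x)) (b : ℕ) :
    x * y ^ b = (-1) ^ b * (y ^ b * x) := by
  have hsemi : SemiconjBy x y (-y) := by rw [SemiconjBy, hxy, neg_mul]
  rw [(hsemi.pow_right b).eq, neg_pow, mul_assoc]

lemma pow_mul_pow_of_anticommute (hxy : x * y = -(y * x)) (a b : ℕ) :
    x ^ a * y ^ b = (-1) ^ (a * b) * (y ^ b * x ^ a) := by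
  have sign_commute (z : M) (m : ℕ) : Commute z ((-1) ^ m) :=
    (Commute.neg_one_right z).pow_right m
  have hsemi : SemiconjBy (y ^ b) ((-1) ^ b * x) x := by
    rw [SemiconjBy, mul_pow_of_anticommute hxy, (sign_commute _ b).left_comm]
  rw [← (hsemi.pow_right a).eq, (sign_commute x b).symm.mul_pow, ← pow_mul, mul_comm b a,
    (sign_commute _ _).left_comm]

lemma pow_eq_one_or_eq_neg_one_of_sq_eq_neg_one (hy : y ^ 2 = -1) (ha : Even a) :
    y ^ a = 1 ∨ y ^ a = -1 := by
  rw [← Nat.two_mul_div_two_of_even ha, pow_mul, hy]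
  exact neg_one_pow_eq_or M _

end Monoid

section Ring

variable {R : Type*} [Ring R] {x y : R} {a b n : ℕ}

lemma pow_mul_pow_add_pow_mul_pow_eq_or_eq_neg (hx : x ^ 2 = 1) (hy : y ^ 2 = -1)
    (hab : Odd (a + b)) :
    x ^ a * y ^ b + y ^ a * x ^ b = x + y ^ (a + b) ∨
      x ^ a * y ^ b + y ^ a * x ^ b = -(x + y ^ (a + b)) := by
  rcases Nat.even_or_odd b with hb | hb
  · have ha : Odd a := (Nat.odd_add.mp hab).mpr hb
    rw [pow_eq_self_of_sq_eq_one_of_odd hx ha, pow_eq_one_of_sq_eq_one_of_even hx hb, pow_add]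
    rcases pow_eq_one_or_eq_neg_one_of_sq_eq_neg_one hy hb with h | h
    · left; simp [h]
    · right; simp [h, add_comm]
  · have ha : Even a := (Nat.odd_add'.mp hab).mp hb
    rw [pow_eq_one_of_sq_eq_one_of_even hx ha, pow_eq_self_of_sq_eq_one_of_odd hx hb, pow_add]
    rcases pow_eq_one_or_eq_neg_one_of_sq_eq_neg_one hy ha with h | h
    · left; simp [h, add_comm]
    · right; simp [h]

lemma pow_mul_pow_add_pow_mul_pow_eq_zero (hx : x ^ 2 = 1) (hy : y ^ 2 = -1)
    (hxy : x * y = -(y * x)) (hn : Odd n) (hab : a + b = 2 * n) :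
    x ^ a * y ^ b + y ^ a * x ^ b = 0 := by
  rcases Nat.even_or_odd' a with ⟨c, rfl | rfl⟩
  · obtain ⟨d, rfl⟩ : ∃ d, b = 2 * d := ⟨n - c, by omega⟩
    have hsign : (-1 : R) ^ d = -(-1) ^ c := by
      grind [Even.neg_one_pow, Odd.neg_one_pow]
    simp only [pow_mul, hx, hy, one_pow, one_mul, mul_one, hsign, neg_add_cancel]
  · obtain ⟨d, rfl⟩ : ∃ d, b = 2 * d + 1 := ⟨n - c - 1, by omega⟩
    have hsign : (-1 : R) ^ d = (-1) ^ c := by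
      grind [Even.neg_one_pow, Odd.neg_one_pow]
    have y_pow : y ^ (2 * d + 1) = y ^ (2 * c + 1) := by
      simp only [pow_succ _ (2 * _), pow_mul, hy, hsign]
    rw [y_pow, pow_eq_self_of_sq_eq_one_of_odd hx ⟨c, rfl⟩,
      pow_eq_self_of_sq_eq_one_of_odd hx ⟨d, rfl⟩, mul_pow_of_anticommute hxy,
      Odd.neg_one_pow ⟨c, rfl⟩, neg_one_mul, neg_add_cancel]

lemma not_commute_add_sub_of_anticommute (h4 : (4 : R) ≠ 0) (hx : x ^ 2 = 1) (hy : y ^ 2 = -1)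
    (hxy : x * y = -(y * x)) : ¬Commute (x + y) (x - y) := by
  intro h
  have four_mul_eq_zero : 4 * (y * x) = 0 :=
    calc 4 * (y * x) = 2 * (y * x) - 2 * (x * y) := by rw [hxy]; noncomm_ring
      _ = (x + y) * (x - y) - (x - y) * (x + y) := by noncomm_ring
      _ = 0 := sub_eq_zero.mpr h.eq
  apply h4
  calc (4 : R) = -(4 * (y * (x ^ 2 * y))) := by
        rw [hx, one_mul, ← sq, hy, mul_neg, mul_one, neg_neg]
    _ = -(4 * (y * x) * (x * y)) := by simp only [sq, mul_assoc]
    _ = 0 := by rw [four_mul_eq_zero, zero_mul, neg_zero]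

lemma not_commute_add_pow_add_pow_three_mul (h4 : (4 : R) ≠ 0) (hn : Odd n) (hx : x ^ 2 = 1)
    (hy : y ^ 2 = -1) (hxy : x * y = -(y * x)) :
    ¬Commute (x + y ^ n) (x ^ (3 * n) + y ^ (3 * n)) := by
  have yn_sq : (y ^ n) ^ 2 = -1 := by rw [pow_right_comm, hy, hn.neg_one_pow]
  have x_mul_yn : x * y ^ n = -(y ^ n * x) := by
    rw [mul_pow_of_anticommute hxy, hn.neg_one_pow, neg_one_mul]
  have y_pow_three_mul : y ^ (3 * n) = -y ^ n := by
    rw [pow_mul', pow_succ, yn_sq, neg_one_mul]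
  have x_pow_three_mul : x ^ (3 * n) = x :=
    pow_eq_self_of_sq_eq_one_of_odd hx (Odd.mul (by decide) hn)
  rw [x_pow_three_mul, y_pow_three_mul, ← sub_eq_add_neg]
  exact not_commute_add_sub_of_anticommute h4 hx yn_sq x_mul_yn

end Ring

section SkewAlg

variable {B : Type*} [Ring B] [Algebra ℂ B]

lemma uGen_mul_vGen : uGen * vGen = -(vGen * uGen) := by
  rw [eq_neg_iff_add_eq_zero]
  simpa [uGen, vGen] using RingQuot.mkAlgHom_rel ℂ SkewRel.rel

/-- The universal property of `A`: a pair of anticommuting elements `x`, `y` of a `ℂ`-algebra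
determines the algebra homomorphism from `A` with `u ↦ x` and `v ↦ y`. -/
def skewLift (x y : B) (hxy : x * y = -(y * x)) : SkewAlg →ₐ[ℂ] B :=
  RingQuot.liftAlgHom ℂ ⟨FreeAlgebra.lift ℂ ![x, y], by
    rintro _ _ ⟨⟩
    simp [hxy]⟩

lemma skewLift_uGen (x y : B) (hxy : x * y = -(y * x)) : skewLift x y hxy uGen = x := by
  simp [skewLift, uGen]

lemma skewLift_vGen (x y : B) (hxy : x * y = -(y * x)) : skewLift x y hxy vGen = y := by
  simp [skewLift, vGen]

lemma lam_pow_self {n : ℕ} (hn : n ≠ 0) : lam n ^ n = 1 :=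
  (Complex.isPrimitiveRoot_exp n hn).pow_eq_one

lemma orbitSum_eq (n a b : ℕ) :
    orbitSum n a b = uGen ^ a * vGen ^ b + lam n ^ b • (vGen ^ a * uGen ^ b) := by
  have hsign : ((-1 : SkewAlg) ^ (a * b)) = algebraMap ℂ SkewAlg ((-1) ^ (a * b)) := by simp
  rw [orbitSum, pow_mul_pow_of_anticommute uGen_mul_vGen b a, mul_comm b a, hsign,
    ← Algebra.smul_def, smul_smul, mul_right_comm, ← mul_pow, neg_one_mul, neg_neg, one_pow,
    one_mul]

lemma map_orbitSum_eq_self {n a b : ℕ} (hn : n ≠ 0) (hab : n ∣ a + b)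
    (g : SkewAlg →ₐ[ℂ] SkewAlg) (hgu : g uGen = vGen) (hgv : g vGen = lam n • uGen) :
    g (orbitSum n a b) = orbitSum n a b := by
  have hlam : lam n ^ (b + a) = 1 := by
    obtain ⟨c, hc⟩ := hab
    rw [add_comm, hc, pow_mul, lam_pow_self hn, one_pow]
  simp only [orbitSum_eq, map_add, map_mul, map_pow, map_smul, hgu, hgv, smul_pow, mul_smul_comm,
    smul_mul_assoc, smul_smul, ← pow_add, hlam, one_smul]
  exact add_comm _ _

lemma map_orbitSum_eq_smul {n a b : ℕ} {ω : ℂ} {x y : B} (hω : ω ^ 2 = lam n) (hωn : ω ^ n = 1)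
    (hab : n ∣ a + b) (φ : SkewAlg →ₐ[ℂ] B) (hu : φ uGen = x) (hv : φ vGen = ω • y) :
    φ (orbitSum n a b) = ω ^ b • (x ^ a * y ^ b + y ^ a * x ^ b) := by
  have hpow : lam n ^ b * ω ^ a = ω ^ b := by
    obtain ⟨c, hc⟩ := hab
    calc lam n ^ b * ω ^ a = ω ^ (a + b) * ω ^ b := by rw [← hω]; ring
      _ = ω ^ b := by rw [hc, pow_mul, hωn, one_pow, one_mul]
  simp only [orbitSum_eq, map_add, map_mul, map_pow, map_smul, hu, hv, smul_pow, mul_smul_comm,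
    smul_mul_assoc, smul_smul, hpow, smul_add]

/-- The subalgebra of `A` generated by the orbit sums of degrees `n` and `2n`, with no constraint on
the order of the two exponents. -/
def lowOrbitSumSubalgebra (n : ℕ) : Subalgebra ℂ SkewAlg :=
  Algebra.adjoin ℂ {z | ∃ a b, (a + b = n ∨ a + b = 2 * n) ∧ z = orbitSum n a b}

lemma commute_map_of_mem_lowOrbitSumSubalgebra {n : ℕ} {ω : ℂ} {x y : B} (hn : Odd n)
    (hω : ω ^ 2 = lam n) (hωn : ω ^ n = 1) (hx : x ^ 2 = 1) (hy : y ^ 2 = -1)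
    (hxy : x * y = -(y * x)) (φ : SkewAlg →ₐ[ℂ] B) (hu : φ uGen = x) (hv : φ vGen = ω • y)
    {z : SkewAlg} (hz : z ∈ lowOrbitSumSubalgebra n) : Commute (x + y ^ n) (φ z) := by
  suffices hle : lowOrbitSumSubalgebra n ≤ (Subalgebra.centralizer ℂ {x + y ^ n}).comap φ from
    (Subalgebra.mem_centralizer_iff ℂ).mp (hle hz) _ rfl
  refine Algebra.adjoin_le ?_
  rintro _ ⟨a, b, hab, rfl⟩
  have hdvd : n ∣ a + b := by rcases hab with h | h <;> simp [h]
  rw [SetLike.mem_coe, Subalgebra.mem_comap, map_orbitSum_eq_smul hω hωn hdvd φ hu hv]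
  refine Subalgebra.smul_mem _ ?_ _
  simp only [Subalgebra.mem_centralizer_iff, Set.mem_singleton_iff, forall_eq]
  rcases hab with rfl | hab
  · rcases pow_mul_pow_add_pow_mul_pow_eq_or_eq_neg hx hy hn with h | h <;> rw [h]
    exact (Commute.refl _).neg_right
  · rw [pow_mul_pow_add_pow_mul_pow_eq_zero hx hy hxy hn hab, mul_zero, zero_mul]

end SkewAlg

open Quaternion in
lemma orbitSum_three_mul_notMem_lowOrbitSumSubalgebra {n : ℕ} (hn : Odd n) :
    orbitSum n (3 * n) 0 ∉ lowOrbitSumSubalgebra n := by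
  intro hmem
  obtain ⟨ω, hω, hωn⟩ := exists_sq_eq_and_pow_eq_one_of_odd hn (lam_pow_self hn.pos.ne')
  let q : QuaternionAlgebra.Basis ℍ[ℂ, 1, -1] (1 : ℂ) 0 (-1) := .self ℂ
  have hi : q.i ^ 2 = 1 := by simp [sq]
  have hj : q.j ^ 2 = -1 := by simp [sq]
  have hij : q.i * q.j = -(q.j * q.i) := by simp
  let φ : SkewAlg →ₐ[ℂ] ℍ[ℂ, 1, -1] :=
    skewLift q.i (ω • q.j) (by rw [mul_smul_comm, smul_mul_assoc, hij, smul_neg])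
  have hφu : φ uGen = q.i := skewLift_uGen ..
  have hφv : φ vGen = ω • q.j := skewLift_vGen ..
  have hφ : φ (orbitSum n (3 * n) 0) = q.i ^ (3 * n) + q.j ^ (3 * n) := by
    rw [map_orbitSum_eq_smul hω hωn (Dvd.intro_left 3 rfl) φ hφu hφv]
    simp only [pow_zero, mul_one, one_smul]
  have hcomm := commute_map_of_mem_lowOrbitSumSubalgebra hn hω hωn hi hj hij φ hφu hφv hmem
  rw [hφ] at hcomm
  have h4 : (4 : ℍ[ℂ, 1, -1]) ≠ 0 := fun h => by
    have h_re : (4 : ℂ) = 0 := congrArg QuaternionAlgebra.re h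
    norm_num at h_re
  exact not_commute_add_pow_add_pow_three_mul h4 hn hi hj hij hcomm

/-- If `n` is odd then the fixed subring `A^G` is strictly larger than the
`ℂ`-subalgebra generated by the orbit sums of degrees `n` and `2n` (the Noether
bound fails). -/
theorem fixed_ne_adjoin_of_odd (n : ℕ) (hodd : Odd n)
    (g : SkewAlg ≃ₐ[ℂ] SkewAlg) (hgu : g uGen = vGen) (hgv : g vGen = lam n • uGen) :
    {a : SkewAlg | g a = a} ≠
      ↑(Algebra.adjoin ℂ
        ({x : SkewAlg | ∃ i : ℕ, i ≤ (n - 1) / 2 ∧ x = orbitSum n (n - i) i} ∪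
         {x : SkewAlg | ∃ i : ℕ, i ≤ n ∧ x = orbitSum n (2 * n - i) i})) := by
  intro hfixed
  have hmem : orbitSum n (3 * n) 0 ∈ {a : SkewAlg | g a = a} :=
    map_orbitSum_eq_self hodd.pos.ne' (Dvd.intro_left 3 rfl) g hgu hgv
  rw [hfixed] at hmem
  refine orbitSum_three_mul_notMem_lowOrbitSumSubalgebra hodd (Algebra.adjoin_mono ?_ hmem)
  rintro _ (⟨i, hi, rfl⟩ | ⟨i, hi, rfl⟩)
  · exact ⟨n - i, i, by omega, rfl⟩
  · exact ⟨2 * n - i, i, by omega, rfl⟩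
end
end
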